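/- Let n, k ≥ 1 and let Gⁱ : ℝⁿ × (ℝⁿ)ᵏ → ℝ be smooth. Define (²G)ⁱ = (1/(k+1)) Σ_{α=1}^{k} Σ_{h} α y⁽ᵅ⁾ʰ ∂Gⁱ/∂y⁽ᵅ⁾ʰ. Then the following are equivalent: (i) each Gⁱ is (k+1)-homogeneous, i.e. Gⁱ(x, λ y⁽¹⁾, …, λᵏ y⁽ᵏ⁾) = λᵏ⁺¹ Gⁱ(x, y⁽¹⁾, …, y⁽ᵏ⁾) for all λ > 0; (ii) for every open interval I, a smooth curve x : I → ℝⁿ satisfies the system dxⁱ/dt = y⁽¹⁾ⁱ, dy⁽ᵅ⁾ⁱ/dt = (α+1) y⁽ᵅ⁺¹⁾ⁱ (α = 1, …, k−1), dy⁽ᵏ⁾ⁱ/dt = −(k+1) Gⁱ(x, y⁽¹⁾, …, y⁽ᵏ⁾) if and only if it satisfies the same system with Gⁱ replaced by (²G)ⁱ (i.e., the k-paths of the two k-semisprays coincide). -/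

import Mathlib

/-!
The two systems have the same solutions iff `²G = G`. Indeed, if the coefficients agree, so do the
systems; conversely, by the Picard–Lindelöf theorem there is through every point `p` a smooth
`k`-path of `G` (`exists_kPath`), and if it is also a `k`-path of `²G`, comparing the
two equations at the initial time gives `²G p = G p`. Finally `²G = G`, that is
`Γᵏ Gⁱ = (k + 1) Gⁱ`, is equivalent to `(k + 1)`-homogeneity by Euler's theorem for the weighted
dilations `scale` (`euler_iff`): the Liouville operator is `s d/ds` along `s ↦ scale s p`.
-/

noncomputable section

abbrev Pt (n k : ℕ) : Type := (Fin n → ℝ) × (Fin k → Fin n → ℝ)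

def scale (n k : ℕ) (lam : ℝ) (p : Pt n k) : Pt n k :=
  (p.1, fun a => lam ^ ((a : ℕ) + 1) • p.2 a)

/-- The partial derivative ∂f/∂y⁽ᵃ⁺¹⁾ʰ at p. -/
def pderivY (n k : ℕ) (f : Pt n k → ℝ) (a : Fin k) (h : Fin n) (p : Pt n k) : ℝ :=
  fderiv ℝ f p (0, Pi.single a (Pi.single h 1))

/-- The Liouville operator Γᵏ f = Σ_{α=1}^k Σ_h α y⁽ᵅ⁾ʰ ∂f/∂y⁽ᵅ⁾ʰ. -/
def liouvOp (n k : ℕ) (f : Pt n k → ℝ) (p : Pt n k) : ℝ :=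
  ∑ a : Fin k, ∑ h : Fin n,
    (((a : ℕ) + 1 : ℕ) : ℝ) * p.2 a h * pderivY n k f a h p

/-- The k-extension of a curve c : ℝ → ℝⁿ:
t ↦ (c t, (1/1!) c'(t), …, (1/k!) c⁽ᵏ⁾(t)). -/
def kExt (n k : ℕ) (c : ℝ → Fin n → ℝ) (t : ℝ) : Pt n k :=
  (c t, fun a => ((((a : ℕ) + 1).factorial : ℝ))⁻¹ • iteratedDeriv ((a : ℕ) + 1) c t)

/-- c is a k-path on I of the k-semispray with coefficients H:
along the k-extension, dy⁽ᵏ⁾ⁱ/dt = (1/k!) c⁽ᵏ⁺¹⁾ⁱ = −(k+1) Hⁱ. -/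
def isKPath (n k : ℕ) (H : Fin n → Pt n k → ℝ) (c : ℝ → Fin n → ℝ) (I : Set ℝ) : Prop :=
  ∀ t ∈ I, ((k.factorial : ℝ))⁻¹ • iteratedDeriv (k + 1) c t =
    fun i => -(((k : ℕ) + 1 : ℕ) : ℝ) * H i (kExt n k c t)

open Set Filter Topology

/-- The Liouville operator is the derivative along the vector field `(0, α y⁽ᵅ⁾)`. -/
lemma liouvOp_eq_fderiv (n k : ℕ) (f : Pt n k → ℝ) (p : Pt n k) :
    liouvOp n k f p
      = fderiv ℝ f p (0, fun a : Fin k => (((a : ℕ) + 1 : ℕ) : ℝ) • p.2 a) := by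
  have h : ((0, fun a : Fin k => (((a : ℕ) + 1 : ℕ) : ℝ) • p.2 a) : Pt n k)
      = ∑ a : Fin k, ∑ h : Fin n, ((((a : ℕ) + 1 : ℕ) : ℝ) * p.2 a h) •
          ((0, Pi.single a (Pi.single h 1)) : Pt n k) := by
    refine Prod.ext ?_ ?_
    · simp [Prod.fst_sum]
    · funext b j
      simp only [Prod.snd_sum, Finset.sum_apply, Prod.smul_snd, Pi.smul_apply]
      rw [Finset.sum_eq_single b, Finset.sum_eq_single j]
      · simp
      · intro h _ hh
        simp [hh.symm]
      · simp
      · intro a _ ha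
        simp [ha.symm]
      · simp
  rw [h, map_sum, liouvOp]
  refine Finset.sum_congr rfl fun a _ => ?_
  rw [map_sum]
  refine Finset.sum_congr rfl fun h _ => ?_
  rw [map_smul, smul_eq_mul, pderivY]

lemma hasDerivAt_scale (n k : ℕ) (p : Pt n k) (s : ℝ) :
    HasDerivAt (fun s => scale n k s p)
      (0, fun a : Fin k => ((((a : ℕ) + 1 : ℕ) : ℝ) * s ^ (a : ℕ)) • p.2 a) s := by
  refine (hasDerivAt_const s p.1).prodMk (hasDerivAt_pi.2 fun a => ?_)
  simpa using (hasDerivAt_pow ((a : ℕ) + 1) s).smul_const (p.2 a)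

/-- The Liouville operator is `s d/ds` along the orbits of the weighted dilations. -/
lemma hasDerivAt_comp_scale (n k : ℕ) (f : Pt n k → ℝ) (hf : Differentiable ℝ f)
    (p : Pt n k) {s : ℝ} (hs : 0 < s) :
    HasDerivAt (fun s => f (scale n k s p)) (s⁻¹ * liouvOp n k f (scale n k s p)) s := by
  have h := (hf (scale n k s p)).hasFDerivAt.comp_hasDerivAt s (hasDerivAt_scale n k p s)
  refine h.congr_deriv ?_
  rw [liouvOp_eq_fderiv, ← smul_eq_mul, ← map_smul]
  congr 1
  refine Prod.ext ?_ ?_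
  · simp
  · funext a
    simp only [scale, Prod.smul_snd, Pi.smul_apply, smul_smul]
    congr 1
    field_simp
    ring

/-- Euler's theorem for weighted homogeneous functions. -/
lemma euler_iff (n k m : ℕ) (f : Pt n k → ℝ) (hf : Differentiable ℝ f) :
    (∀ lam : ℝ, 0 < lam → ∀ p : Pt n k, f (scale n k lam p) = lam ^ m * f p) ↔
      ∀ p, liouvOp n k f p = m * f p := by
  have scale_one : ∀ p : Pt n k, scale n k 1 p = p := fun p => by simp [scale]
  constructor
  · intro h p
    have h1 := hasDerivAt_comp_scale n k f hf p one_pos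
    have h2 : HasDerivAt (fun s => f (scale n k s p)) ((m * 1 ^ (m - 1)) * f p) 1 := by
      refine ((hasDerivAt_pow m (1 : ℝ)).mul_const (f p)).congr_of_eventuallyEq ?_
      filter_upwards [lt_mem_nhds (one_pos : (0 : ℝ) < 1)] with s hs using h s hs p
    simpa [scale_one] using h1.unique h2
  · intro h lam hlam p
    -- `s ↦ f (scale s p) / s ^ m` has zero derivative on `(0, ∞)`.
    have hd : ∀ s ∈ Ioi (0 : ℝ),
        HasDerivAt (fun s => f (scale n k s p) / s ^ m) 0 s := by
      intro s hs
      have hs : 0 < s := hs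
      refine ((hasDerivAt_comp_scale n k f hf p hs).div (hasDerivAt_pow m s)
        (pow_pos hs m).ne').congr_deriv ?_
      rw [h]
      rcases m with _ | m
      · simp
      · have := hs.ne'
        simp only [Nat.add_sub_cancel]
        field_simp
        ring
    have hc := isOpen_Ioi.is_const_of_deriv_eq_zero isPreconnected_Ioi
      (fun s hs => (hd s hs).differentiableAt.differentiableWithinAt)
      (fun s hs => (hd s hs).deriv) (mem_Ioi.2 hlam) (mem_Ioi.2 one_pos)
    have := (pow_pos hlam m).ne'
    simp only [scale_one, one_pow, div_one] at hc
    field_simp at hc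
    linarith

/-- An integral curve of a smooth vector field is smooth. -/
lemma contDiffOn_of_integralCurve {E : Type*} [NormedAddCommGroup E] [NormedSpace ℝ E]
    {V : E → E} (hV : ContDiff ℝ (⊤ : ℕ∞) V) {γ : ℝ → E} {I : Set ℝ} (hI : IsOpen I)
    (h : ∀ t ∈ I, HasDerivAt γ (V (γ t)) t) : ContDiffOn ℝ (⊤ : ℕ∞) γ I := by
  refine contDiffOn_infty.2 fun m => ?_
  induction m with
  | zero => exact contDiffOn_zero.2 fun t ht => (h t ht).continuousAt.continuousWithinAt
  | succ m ih =>
    push_cast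
    refine (contDiffOn_succ_iff_deriv_of_isOpen hI).2
      ⟨fun t ht => (h t ht).differentiableAt.differentiableWithinAt, by simp, ?_⟩
    exact ((hV.of_le (by exact_mod_cast le_top)).comp_contDiffOn ih).congr
      fun t ht => (h t ht).deriv

/-- The `k`-semispray with coefficients `G`, as a vector field. The entry of index `a` of the
second component is the derivative of `y⁽ᵃ⁺¹⁾`. -/
def sprayField (n k : ℕ) (hk : 0 < k) (G : Fin n → Pt n k → ℝ) (p : Pt n k) : Pt n k :=
  (p.2 ⟨0, hk⟩, fun a =>
    if h : (a : ℕ) + 1 < k then (((a : ℕ) + 2 : ℕ) : ℝ) • p.2 ⟨(a : ℕ) + 1, h⟩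
    else fun i => -((k + 1 : ℕ) : ℝ) * G i p)

lemma contDiff_sprayField (n k : ℕ) (hk : 0 < k) (G : Fin n → Pt n k → ℝ)
    (hG : ∀ i, ContDiff ℝ (⊤ : ℕ∞) (G i)) :
    ContDiff ℝ (⊤ : ℕ∞) (sprayField n k hk G) := by
  have hproj : ∀ a : Fin k, ContDiff ℝ (⊤ : ℕ∞) (fun p : Pt n k => p.2 a) := fun a =>
    (contDiff_apply ℝ (Fin n → ℝ) a).comp contDiff_snd
  refine (hproj _).prodMk (contDiff_pi.2 fun a => ?_)
  by_cases h : (a : ℕ) + 1 < k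
  · simp only [h, dite_true]
    exact (hproj ⟨(a : ℕ) + 1, h⟩).const_smul (((a : ℕ) + 2 : ℕ) : ℝ)
  · simp only [h, dite_false]
    exact contDiff_pi.2 fun i => contDiff_const.mul (hG i)

/-- Through every point passes a smooth `k`-path, defined on an open interval around `0`. -/
lemma exists_kPath (n k : ℕ) (hk : 0 < k) (G : Fin n → Pt n k → ℝ)
    (hG : ∀ i, ContDiff ℝ (⊤ : ℕ∞) (G i)) (p : Pt n k) :
    ∃ ε > (0 : ℝ), ∃ c : ℝ → Fin n → ℝ, ContDiffOn ℝ (⊤ : ℕ∞) c (Ioo (-ε) ε) ∧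
      isKPath n k G c (Ioo (-ε) ε) ∧ kExt n k c 0 = p := by
  have hV := contDiff_sprayField n k hk G hG
  obtain ⟨γ, hγ0, ε, hε, hγ⟩ :=
    ((hV.of_le (by exact_mod_cast le_top) : ContDiff ℝ 1 _).contDiffAt
      (x := p)).exists_forall_mem_closedBall_exists_eq_forall_mem_Ioo_hasDerivAt₀ 0
  rw [zero_sub, zero_add] at hγ
  have hsm := contDiffOn_of_integralCurve hV isOpen_Ioo hγ
  have hfst : ∀ t ∈ Ioo (-ε) ε, HasDerivAt (fun t => (γ t).1) ((γ t).2 ⟨0, hk⟩) t :=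
    fun t ht => (hγ t ht).fst
  have hsnd : ∀ (a : Fin k), ∀ t ∈ Ioo (-ε) ε,
      HasDerivAt (fun t => (γ t).2 a) ((sprayField n k hk G (γ t)).2 a) t :=
    fun a t ht => hasDerivAt_pi.1 (hγ t ht).snd a
  -- The system forces `y⁽ᵅ⁾ = c⁽ᵅ⁾ / α!` along the integral curve.
  have hiter : ∀ (a : ℕ) (ha : a < k), ∀ t ∈ Ioo (-ε) ε,
      iteratedDeriv (a + 1) (fun t => (γ t).1) t
        = ((a + 1).factorial : ℝ) • (γ t).2 ⟨a, ha⟩ := by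
    intro a
    induction a with
    | zero =>
      intro ha t ht
      rw [zero_add, iteratedDeriv_one, (hfst t ht).deriv]
      simp
    | succ a ih =>
      intro ha t ht
      rw [iteratedDeriv_succ]
      have hev : iteratedDeriv (a + 1) (fun t => (γ t).1) =ᶠ[𝓝 t]
          fun t => ((a + 1).factorial : ℝ) • (γ t).2 ⟨a, by omega⟩ := by
        filter_upwards [isOpen_Ioo.mem_nhds ht] with s hs using ih (by omega) s hs
      rw [hev.deriv_eq, ((hsnd ⟨a, by omega⟩ t ht).fun_const_smul _).deriv]
      simp only [sprayField, ha, dite_true, smul_smul]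
      congr 1
      rw [Nat.factorial_succ (a + 1)]
      push_cast
      ring
  have hext : ∀ t ∈ Ioo (-ε) ε, kExt n k (fun t => (γ t).1) t = γ t := by
    intro t ht
    refine Prod.ext rfl (funext fun a => ?_)
    simp only [kExt]
    rw [hiter a a.2 t ht, inv_smul_smul₀ (by positivity)]
  refine ⟨ε, hε, fun t => (γ t).1, contDiff_fst.comp_contDiffOn hsm, ?_, ?_⟩
  · intro t ht
    rw [hext t ht, iteratedDeriv_succ]
    obtain ⟨m, rfl⟩ : ∃ m, k = m + 1 := ⟨k - 1, by omega⟩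
    have hev : iteratedDeriv (m + 1) (fun t => (γ t).1) =ᶠ[𝓝 t]
        fun t => ((m + 1).factorial : ℝ) • (γ t).2 ⟨m, by omega⟩ := by
      filter_upwards [isOpen_Ioo.mem_nhds ht] with s hs using hiter m (by omega) s hs
    rw [hev.deriv_eq, ((hsnd ⟨m, by omega⟩ t ht).fun_const_smul _).deriv,
      inv_smul_smul₀ (by positivity)]
    simp [sprayField]
  · rw [hext 0 ⟨by linarith, hε⟩, hγ0]

theorem stmt_8 (n k : ℕ) (hn : 1 ≤ n) (hk : 1 ≤ k)
    (G : Fin n → Pt n k → ℝ) (hG : ∀ i, ContDiff ℝ (⊤ : ℕ∞) (G i)) :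
    (∀ i : Fin n, ∀ lam : ℝ, 0 < lam → ∀ p : Pt n k,
        G i (scale n k lam p) = lam ^ (k + 1) * G i p) ↔
    (∀ I : Set ℝ, IsOpen I → I.OrdConnected →
      ∀ c : ℝ → Fin n → ℝ, ContDiffOn ℝ (⊤ : ℕ∞) c I →
        (isKPath n k G c I ↔
          isKPath n k (fun i p => ((k : ℝ) + 1)⁻¹ * liouvOp n k (G i) p) c I)) := by
  have hd : ∀ i, Differentiable ℝ (G i) := fun i => (hG i).differentiable (by simp)
  have hk1 : (k : ℝ) + 1 ≠ 0 := by positivity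
  constructor
  · intro h I _ _ c _
    have hGG : (fun i p => ((k : ℝ) + 1)⁻¹ * liouvOp n k (G i) p) = G := by
      funext i p
      rw [(euler_iff n k (k + 1) (G i) (hd i)).1 (h i) p]
      push_cast
      field_simp
    rw [hGG]
  · intro h i
    refine (euler_iff n k (k + 1) (G i) (hd i)).2 fun p => ?_
    obtain ⟨ε, hε, c, hc, hpath, h0⟩ := exists_kPath n k hk G hG p
    have hmem : (0 : ℝ) ∈ Ioo (-ε) ε := ⟨by linarith, hε⟩
    have hpath' := (h _ isOpen_Ioo ordConnected_Ioo c hc).1 hpath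
    have heq := congrFun ((hpath 0 hmem).symm.trans (hpath' 0 hmem)) i
    simp only [h0] at heq
    push_cast at heq ⊢
    field_simp at heq
    linarith
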